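/- Fix an odd integer d ≥ 3. There exist a constant c > 0 and an integer n_0, depending only on d, such that for all integers n, m ≥ n_0 there exist d-dimensional polytopes 𝒫 and 𝒬 in E^d with exactly n and m vertices respectively, such that the total number of nonempty exposed faces of the Minkowski sum 𝒫 + 𝒬 is at least c · (n·m^{⌊d/2⌋} + m·n^{⌊d/2⌋}). (Lower bound half of the Minkowski-sum consequence of Theorem 2.6 stated in Section 7.) -/

import Mathlib

open Set Pointwise

/-- The dimension of the affine hull of a set. -/
noncomputable def adim {N : ℕ} (F : Set (EuclideanSpace ℝ (Fin N))) : ℕ :=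
  Module.finrank ℝ (vectorSpan ℝ F)

/-- The combinatorial complexity of `C`: the number of nonempty exposed faces of `C`. -/
noncomputable def totalFaces {N : ℕ} (C : Set (EuclideanSpace ℝ (Fin N))) : ℕ :=
  {F : Set (EuclideanSpace ℝ (Fin N)) | IsExposed ℝ C F ∧ F.Nonempty}.ncard

/-!
Write `d = 2r + 3` and `k = r + 1 = ⌊d/2⌋`. By symmetry, assume `n ≤ m`; it is then enough to obtain
a constant multiple of `n * m ^ k` faces.

`𝒬` is a pyramid over the cyclic polytope with vertices `(u, u², …, u^(2k), 0)`, `u = 0, …, m - 2`.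
For every `k`-set `G` of parameters, the polynomial `-∏_{u ∈ G} (X - u)²` gives a linear functional
on the first `2k` coordinates whose maximum over the base is attained exactly on `G`, and whose
coefficient in the coordinate of index `2k` is always `-1`. The last coordinate of the functional
does not affect the base, so it is a free parameter `t`. `𝒫` is the convex hull of the planar points
`(0, …, 0, s², s)` together with `2k - 1` further vertices making it full-dimensional. On the planar
points the functional above is `-s² + t s`, which for `t = 2 s₀` is maximal exactly at `s = s₀`.
Hence all pairs `(G, s₀)` yield distinct faces of `𝒫 + 𝒬`. The remaining vertices of both polytopes
are put so far out in the coordinate of index `2k` that they never interfere.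

The general facts on finite convex hulls are `ncard_extremePoints_of_separated`,
`adim_eq_of_separating` and `card_le_totalFaces`; the construction is `exists_large_sum`.
-/

/-! ### Faces, vertices and dimension of finite convex hulls -/

/-- If every point of a finite family is the unique maximiser of some linear functional, then the
convex hull has exactly the points of the family as vertices, without repetition. -/
lemma ncard_extremePoints_of_separated {N : ℕ} {ι : Type*} [Fintype ι]
    (v : ι → EuclideanSpace ℝ (Fin N))
    (h : ∀ i, ∃ f : StrongDual ℝ (EuclideanSpace ℝ (Fin N)), ∀ j, j ≠ i → f (v j) < f (v i)) :
    ((convexHull ℝ (range v)).extremePoints ℝ).ncard = Fintype.card ι := by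
  have hinj : Function.Injective v := by
    intro i j hij
    by_contra hne
    obtain ⟨f, hf⟩ := h i
    have := hf j (Ne.symm hne)
    rw [hij] at this
    exact lt_irrefl _ this
  have heq : (convexHull ℝ (range v)).extremePoints ℝ = range v := by
    refine Subset.antisymm extremePoints_convexHull_subset ?_
    rintro _ ⟨i, rfl⟩
    obtain ⟨f, hf⟩ := h i
    have hc : IsCompact (convexHull ℝ (range v)) := (finite_range v).isCompact_convexHull (𝕜 := ℝ)
    have hvi : v i ∈ convexHull ℝ (range v) := subset_convexHull ℝ _ ⟨i, rfl⟩
    have hexp : IsExposed ℝ (convexHull ℝ (range v)) (f.toExposed (convexHull ℝ (range v))) :=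
      ContinuousLinearMap.toExposed.isExposed
    obtain ⟨z, hz, hzmax⟩ := hc.exists_isMaxOn ⟨_, hvi⟩ f.continuous.continuousOn
    -- A vertex of the face exposed by `f` is a vertex of the hull, so it is `v j` for some `j`.
    obtain ⟨y, hy⟩ := (hexp.isCompact hc).extremePoints_nonempty ⟨z, hz, fun w hw => hzmax hw⟩
    have hy' := hexp.isExtreme.extremePoints_subset_extremePoints hy
    obtain ⟨j, rfl⟩ := extremePoints_convexHull_subset hy'
    have hle : f (v i) ≤ f (v j) := hy.1.2 _ hvi
    by_cases hji : j = i
    · rw [← hji]; exact hy'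
    · exact absurd (hf j hji) (not_lt.2 hle)
  rw [heq, ← image_univ, ncard_image_of_injective _ hinj, ncard_univ, Nat.card_eq_fintype_card]

lemma adim_eq_of_separating {N : ℕ} (V : Set (EuclideanSpace ℝ (Fin N)))
    (h : ∀ f : EuclideanSpace ℝ (Fin N) →ₗ[ℝ] ℝ, (∀ x ∈ V, ∀ y ∈ V, f x = f y) → f = 0) :
    adim (convexHull ℝ V) = N := by
  have htop : vectorSpan ℝ V = ⊤ := by
    by_contra hne
    obtain ⟨f, hf0, hf⟩ := Submodule.exists_le_ker_of_lt_top _ (lt_top_iff_ne_top.2 hne)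
    refine hf0 (h f fun x hx y hy => ?_)
    have := hf (vsub_mem_vectorSpan ℝ hx hy)
    rw [LinearMap.mem_ker, vsub_eq_sub, map_sub] at this
    linarith
  rw [adim, ← direction_affineSpan, affineSpan_convexHull, direction_affineSpan, htop, finrank_top]
  simp

lemma finite_exposed_convexHull {N : ℕ} {S : Set (EuclideanSpace ℝ (Fin N))} (hS : S.Finite) :
    {F | IsExposed ℝ (convexHull ℝ S) F ∧ F.Nonempty}.Finite := by
  have hc : IsCompact (convexHull ℝ S) := hS.isCompact_convexHull (𝕜 := ℝ)
  -- By Krein–Milman a face is determined by its vertices, which form a subset of `S`.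
  refine Finite.of_finite_image (f := fun F => F.extremePoints ℝ)
    (hS.finite_subsets.subset ?_) ?_
  · rintro _ ⟨F, ⟨hF, -⟩, rfl⟩
    exact (hF.isExtreme.extremePoints_subset_extremePoints).trans extremePoints_convexHull_subset
  · rintro F ⟨hF, -⟩ G ⟨hG, -⟩ hFG
    rw [← closure_convexHull_extremePoints (hF.isCompact hc) (hF.convex (convex_convexHull ℝ S)),
      ← closure_convexHull_extremePoints (hG.isCompact hc) (hG.convex (convex_convexHull ℝ S))]
    simp only at hFG
    rw [hFG]

/-- Functionals whose faces on the Minkowski sum are pairwise distinct bound the number of faces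
from below. -/
lemma card_le_totalFaces {N : ℕ} {V W : Set (EuclideanSpace ℝ (Fin N))} (hV : V.Finite)
    (hW : W.Finite) (hV0 : V.Nonempty) (hW0 : W.Nonempty) {τ : Type*} (T : Finset τ)
    (f : τ → StrongDual ℝ (EuclideanSpace ℝ (Fin N)))
    (hf : InjOn (fun a => (f a).toExposed (convexHull ℝ V + convexHull ℝ W)) T) :
    T.card ≤ totalFaces (convexHull ℝ V + convexHull ℝ W) := by
  have hfin := finite_exposed_convexHull (hV.add hW)
  have hc : IsCompact (convexHull ℝ (V + W)) := (hV.add hW).isCompact_convexHull (𝕜 := ℝ)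
  rw [← convexHull_add] at hf ⊢
  rw [totalFaces, ← ncard_coe_finset T, ← hf.ncard_image]
  refine ncard_le_ncard ?_ hfin
  rintro _ ⟨a, -, rfl⟩
  refine ⟨ContinuousLinearMap.toExposed.isExposed, ?_⟩
  obtain ⟨z, hz, hzmax⟩ := hc.exists_isMaxOn ((hV0.add hW0).convexHull)
    (f a).continuous.continuousOn
  exact ⟨z, hz, fun w hw => hzmax hw⟩

lemma le_on_convexHull {N : ℕ} {V : Set (EuclideanSpace ℝ (Fin N))}
    (f : StrongDual ℝ (EuclideanSpace ℝ (Fin N))) {c : ℝ} (h : ∀ x ∈ V, f x ≤ c) :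
    ∀ x ∈ convexHull ℝ V, f x ≤ c := fun _ hx =>
  convexHull_min (t := {x | f x ≤ c}) h (convex_halfSpace_le f.isLinear c) hx

/-- A sum `x + y` lies in the face of the Minkowski sum exposed by `f` exactly when `x` and `y` are
both maximisers. -/
lemma add_mem_toExposed_iff {N : ℕ} {V W : Set (EuclideanSpace ℝ (Fin N))}
    (f : StrongDual ℝ (EuclideanSpace ℝ (Fin N))) {x₀ y₀ x y : EuclideanSpace ℝ (Fin N)}
    (hx₀ : x₀ ∈ V) (hy₀ : y₀ ∈ W) (hxm : ∀ z ∈ V, f z ≤ f x₀) (hym : ∀ z ∈ W, f z ≤ f y₀)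
    (hx : x ∈ V) (hy : y ∈ W) :
    x + y ∈ f.toExposed (convexHull ℝ V + convexHull ℝ W) ↔ f x = f x₀ ∧ f y = f y₀ := by
  constructor
  · rintro ⟨-, h⟩
    have h1 := h (x₀ + y₀) (add_mem_add (subset_convexHull ℝ _ hx₀) (subset_convexHull ℝ _ hy₀))
    rw [map_add, map_add] at h1
    have h2 := hxm x hx
    have h3 := hym y hy
    constructor <;> linarith
  · rintro ⟨h1, h2⟩
    refine ⟨add_mem_add (subset_convexHull ℝ _ hx) (subset_convexHull ℝ _ hy), ?_⟩
    rintro _ ⟨a, ha, b, hb, rfl⟩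
    have h3 := le_on_convexHull f hxm a ha
    have h4 := le_on_convexHull f hym b hb
    simp only [map_add]
    linarith

/-! ### Coordinates -/

/-- The vector of length `N` whose coordinates are the first `N` terms of a sequence. -/
noncomputable def seqVec (N : ℕ) (g : ℕ → ℝ) : EuclideanSpace ℝ (Fin N) :=
  WithLp.toLp 2 fun i => g i

/-- The functional `x ↦ ∑ w i * x i`. -/
noncomputable def seqFun (N : ℕ) (w : ℕ → ℝ) : StrongDual ℝ (EuclideanSpace ℝ (Fin N)) :=
  innerSL ℝ (seqVec N w)

lemma seqFun_seqVec (N : ℕ) (w g : ℕ → ℝ) :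
    seqFun N w (seqVec N g) = ∑ i ∈ Finset.range N, w i * g i := by
  rw [← Fin.sum_univ_eq_sum_range (fun i => w i * g i)]
  simp [seqFun, seqVec, PiLp.inner_apply, mul_comm]

lemma exists_eq_seqFun {N : ℕ} (f : EuclideanSpace ℝ (Fin N) →ₗ[ℝ] ℝ) :
    ∃ w : ℕ → ℝ, ∀ x, f x = seqFun N w x := by
  refine ⟨fun i => if h : i < N then f (EuclideanSpace.single ⟨i, h⟩ 1) else 0, fun x => ?_⟩
  have hx : x = ∑ i, x i • EuclideanSpace.single i (1 : ℝ) := by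
    ext j
    simp [Pi.single_apply]
  conv_lhs => rw [hx]
  simp [seqFun, seqVec, PiLp.inner_apply]

/-! ### The two polytopes -/

/-- The planar vertices of `𝒫`: `s²` and `s` in the last two coordinates. -/
noncomputable def planeVertex (r : ℕ) (s : ℝ) : ℕ → ℝ := fun i =>
  if i = 2 * r + 1 then s ^ 2 else if i = 2 * r + 2 then s else 0

/-- The further vertices of `𝒫`, used with `j < 2 * r + 1`. -/
noncomputable def farVertex (r : ℕ) (A : ℝ) (j : ℕ) : ℕ → ℝ := fun i =>
  if i = 2 * r + 1 then A else if i = j then 1 else 0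

/-- The base vertices of `𝒬`: points `(u, u², …, u^(2r+2), 0)`. -/
noncomputable def curveVertex (r : ℕ) (u : ℝ) : ℕ → ℝ := fun i =>
  if i < 2 * r + 2 then u ^ (i + 1) else 0

/-- The apex of the pyramid `𝒬`. -/
noncomputable def apexVertex (r : ℕ) (B : ℝ) : ℕ → ℝ := fun i =>
  if i = 2 * r + 1 then B else if i = 2 * r + 2 then 1 else 0

/-- The coefficients of the functional attached to a polynomial `p` of degree `2r + 2` and a last
coordinate `t`: on the base of `𝒬` it is `-p` up to a constant. -/
noncomputable def polyWeight (r : ℕ) (p : Polynomial ℝ) (t : ℝ) : ℕ → ℝ := fun i =>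
  if i < 2 * r + 2 then - p.coeff (i + 1) else t

lemma seqFun_planeVertex (r : ℕ) (w : ℕ → ℝ) (s : ℝ) :
    seqFun (2 * r + 3) w (seqVec _ (planeVertex r s)) =
      w (2 * r + 1) * s ^ 2 + w (2 * r + 2) * s := by
  rw [seqFun_seqVec, Finset.sum_range_succ, Finset.sum_range_succ, Finset.sum_eq_zero]
  · simp [planeVertex]
  · intro i hi
    rw [Finset.mem_range] at hi
    simp [planeVertex, show i ≠ 2 * r + 1 by omega, show i ≠ 2 * r + 2 by omega]

lemma seqFun_farVertex (r : ℕ) (w : ℕ → ℝ) (A : ℝ) (j : ℕ) (hj : j < 2 * r + 1) :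
    seqFun (2 * r + 3) w (seqVec _ (farVertex r A j)) = w j + w (2 * r + 1) * A := by
  rw [seqFun_seqVec, Finset.sum_range_succ, Finset.sum_range_succ, Finset.sum_eq_single j]
  · simp [farVertex, hj.ne, show 2 * r + 2 ≠ j by omega]
  · intro i hi hij
    rw [Finset.mem_range] at hi
    simp [farVertex, hij, hi.ne]
  · simp [hj]

lemma seqFun_apexVertex (r : ℕ) (w : ℕ → ℝ) (B : ℝ) :
    seqFun (2 * r + 3) w (seqVec _ (apexVertex r B)) = w (2 * r + 1) * B + w (2 * r + 2) := by
  rw [seqFun_seqVec, Finset.sum_range_succ, Finset.sum_range_succ, Finset.sum_eq_zero]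
  · simp [apexVertex]
  · intro i hi
    rw [Finset.mem_range] at hi
    simp [apexVertex, show i ≠ 2 * r + 1 by omega, show i ≠ 2 * r + 2 by omega]

lemma seqFun_curveVertex (r : ℕ) (w : ℕ → ℝ) (u : ℝ) :
    seqFun (2 * r + 3) w (seqVec _ (curveVertex r u)) =
      ∑ i ∈ Finset.range (2 * r + 2), w i * u ^ (i + 1) := by
  rw [seqFun_seqVec, Finset.sum_range_succ]
  simp only [curveVertex, lt_irrefl, if_false, mul_zero, add_zero]
  refine Finset.sum_congr rfl fun i hi => ?_
  rw [if_pos (Finset.mem_range.1 hi)]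

lemma polyWeight_curveVertex (r : ℕ) (p : Polynomial ℝ) (hp : p.natDegree = 2 * r + 2)
    (t u : ℝ) : seqFun (2 * r + 3) (polyWeight r p t) (seqVec _ (curveVertex r u)) =
      p.eval 0 - p.eval u := by
  rw [seqFun_curveVertex, Polynomial.eval_eq_sum_range' (n := 2 * r + 3) (by omega) u,
    Finset.sum_range_succ' (fun i => p.coeff i * u ^ i), ← Polynomial.coeff_zero_eq_eval_zero]
  have : ∑ i ∈ Finset.range (2 * r + 2), polyWeight r p t i * u ^ (i + 1) =
      - ∑ i ∈ Finset.range (2 * r + 2), p.coeff (i + 1) * u ^ (i + 1) := by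
    rw [← Finset.sum_neg_distrib]
    refine Finset.sum_congr rfl fun i hi => ?_
    rw [polyWeight, if_pos (Finset.mem_range.1 hi)]
    ring
  rw [this]
  ring

lemma polyWeight_top (r : ℕ) (p : Polynomial ℝ) (hp : p.natDegree = 2 * r + 2) (hm : p.Monic)
    (t : ℝ) : polyWeight r p t (2 * r + 1) = -1 := by
  rw [polyWeight, if_pos (by omega), show 2 * r + 1 + 1 = p.natDegree by omega, hm.coeff_natDegree]

lemma polyWeight_last (r : ℕ) (p : Polynomial ℝ) (t : ℝ) :
    polyWeight r p t (2 * r + 2) = t := by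
  simp [polyWeight]

/-- The polynomial `∏ (X - u)²` over `u ∈ G`; its negative exposes the face of `𝒬` spanned by
`G`. -/
noncomputable def facePoly {a : ℕ} (G : Finset (Fin a)) : Polynomial ℝ :=
  ∏ u ∈ G, (Polynomial.X - Polynomial.C ((u : ℕ) : ℝ)) ^ 2

lemma facePoly_monic {a : ℕ} (G : Finset (Fin a)) : (facePoly G).Monic :=
  Polynomial.monic_prod_of_monic _ _ fun _ _ => (Polynomial.monic_X_sub_C _).pow 2

lemma facePoly_natDegree {a : ℕ} (G : Finset (Fin a)) : (facePoly G).natDegree = 2 * G.card := by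
  rw [facePoly, Polynomial.natDegree_prod_of_monic _ _
    fun _ _ => (Polynomial.monic_X_sub_C _).pow 2]
  simp only [Polynomial.natDegree_pow, Polynomial.natDegree_X_sub_C, Finset.sum_const, smul_eq_mul]
  ring

lemma facePoly_eval_nonneg {a : ℕ} (G : Finset (Fin a)) (x : ℝ) : 0 ≤ (facePoly G).eval x := by
  rw [facePoly, Polynomial.eval_prod]
  exact Finset.prod_nonneg fun u _ => by simpa using sq_nonneg _

lemma facePoly_eval_eq_zero_iff {a : ℕ} (G : Finset (Fin a)) (u : Fin a) :
    (facePoly G).eval ((u : ℕ) : ℝ) = 0 ↔ u ∈ G := by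
  rw [facePoly, Polynomial.eval_prod, Finset.prod_eq_zero_iff]
  constructor
  · rintro ⟨v, hv, h⟩
    simp only [Polynomial.eval_pow, Polynomial.eval_sub, Polynomial.eval_X, Polynomial.eval_C] at h
    have h' : ((u : ℕ) : ℝ) = ((v : ℕ) : ℝ) := sub_eq_zero.1 (pow_eq_zero_iff two_ne_zero |>.1 h)
    rwa [Fin.ext (Nat.cast_injective h')]
  · intro h
    exact ⟨u, h, by simp⟩

/-- The vertices of `𝒫`. -/
noncomputable def vertP (r a : ℕ) (A : ℝ) :
    Fin a ⊕ Fin (2 * r + 1) → EuclideanSpace ℝ (Fin (2 * r + 3)) :=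
  Sum.elim (fun s => seqVec _ (planeVertex r ((s : ℕ) : ℝ)))
    (fun j => seqVec _ (farVertex r A (j : ℕ)))

/-- The vertices of `𝒬`. -/
noncomputable def vertQ (r b : ℕ) (B : ℝ) :
    Fin b ⊕ Unit → EuclideanSpace ℝ (Fin (2 * r + 3)) :=
  Sum.elim (fun u => seqVec _ (curveVertex r ((u : ℕ) : ℝ)))
    (fun _ => seqVec _ (apexVertex r B))

lemma ncard_vertP (r a : ℕ) (A : ℝ) (hA : 0 < A) :
    ((convexHull ℝ (range (vertP r a A))).extremePoints ℝ).ncard = a + (2 * r + 1) := by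
  rw [ncard_extremePoints_of_separated]
  · simp
  rintro (s | j)
  · refine ⟨seqFun _ fun i => if i = 2 * r + 1 then -1 else
      if i = 2 * r + 2 then 2 * ((s : ℕ) : ℝ) else 0, ?_⟩
    rintro (s' | j) hne
    · simp only [vertP, Sum.elim_inl, seqFun_planeVertex]
      have h : ((s : ℕ) : ℝ) - ((s' : ℕ) : ℝ) ≠ 0 := by
        intro h
        exact hne (congrArg _ (Fin.ext (Nat.cast_injective (sub_eq_zero.1 h)).symm))
      have := sq_pos_of_ne_zero h
      simp
      nlinarith
    · simp only [vertP, Sum.elim_inl, Sum.elim_inr, seqFun_planeVertex,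
        seqFun_farVertex r _ A _ j.2]
      have := j.2
      have := sq_nonneg ((s : ℕ) : ℝ)
      simp [show (j : ℕ) ≠ 2 * r + 1 by omega, show (j : ℕ) ≠ 2 * r + 2 by omega]
      nlinarith
  · have hj := j.2
    refine ⟨seqFun _ fun i => if i = (j : ℕ) then 1 else 0, ?_⟩
    rintro (s' | j') hne
    · simp only [vertP, Sum.elim_inl, Sum.elim_inr, seqFun_planeVertex, seqFun_farVertex r _ A _ hj]
      simp [show 2 * r + 1 ≠ (j : ℕ) by omega, show 2 * r + 2 ≠ (j : ℕ) by omega]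
    · simp only [vertP, Sum.elim_inr, seqFun_farVertex r _ A _ hj, seqFun_farVertex r _ A _ j'.2]
      have : (j' : ℕ) ≠ j := fun h => hne (congrArg _ (Fin.ext h))
      simp [this, show 2 * r + 1 ≠ (j : ℕ) by omega]

lemma ncard_vertQ (r b : ℕ) (B : ℝ) (hB : 0 < B) :
    ((convexHull ℝ (range (vertQ r b B))).extremePoints ℝ).ncard = b + 1 := by
  rw [ncard_extremePoints_of_separated]
  · simp
  rintro (u | _)
  · set p : Polynomial ℝ := (Polynomial.X - Polynomial.C ((u : ℕ) : ℝ)) ^ (2 * r + 2) with hp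
    have hm : p.Monic := (Polynomial.monic_X_sub_C _).pow _
    have hdeg : p.natDegree = 2 * r + 2 := by
      rw [hp, Polynomial.natDegree_pow, Polynomial.natDegree_X_sub_C, mul_one]
    have hpos : ∀ x : ℝ, x ≠ ((u : ℕ) : ℝ) → 0 < p.eval x := fun x hx => by
      simp only [hp, Polynomial.eval_pow, Polynomial.eval_sub, Polynomial.eval_X,
        Polynomial.eval_C]
      exact Even.pow_pos ⟨r + 1, by ring⟩ (sub_ne_zero.2 hx)
    have hzero : p.eval ((u : ℕ) : ℝ) = 0 := by simp [hp]
    refine ⟨seqFun _ (polyWeight r p 0), ?_⟩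
    rintro (u' | _) hne
    · simp only [vertQ, Sum.elim_inl, polyWeight_curveVertex r p hdeg, hzero]
      have := hpos ((u' : ℕ) : ℝ) fun h => hne (congrArg _ (Fin.ext (Nat.cast_injective h)))
      linarith
    · simp only [vertQ, Sum.elim_inl, Sum.elim_inr, polyWeight_curveVertex r p hdeg, hzero,
        seqFun_apexVertex, polyWeight_top r p hdeg hm, polyWeight_last]
      have : 0 ≤ p.eval 0 := by
        by_cases h : (0 : ℝ) = ((u : ℕ) : ℝ)
        · rw [← h] at hzero
          exact hzero.ge
        · exact (hpos 0 h).le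
      linarith
  · refine ⟨seqFun _ fun i => if i = 2 * r + 2 then 1 else 0, ?_⟩
    rintro (u' | _) hne
    · simp only [vertQ, Sum.elim_inl, Sum.elim_inr, seqFun_apexVertex, seqFun_curveVertex]
      rw [Finset.sum_eq_zero]
      · simp
      · intro i hi
        rw [Finset.mem_range] at hi
        simp [hi.ne]
    · exact absurd rfl hne

lemma adim_vertP (r a : ℕ) (A : ℝ) (ha : 3 ≤ a) :
    adim (convexHull ℝ (range (vertP r a A))) = 2 * r + 3 := by
  refine adim_eq_of_separating _ fun f hf => ?_
  obtain ⟨w, hw⟩ := exists_eq_seqFun f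
  have h0 : ∀ i, f (vertP r a A i) = f (vertP r a A (Sum.inl ⟨0, by omega⟩)) := fun i =>
    hf _ ⟨_, rfl⟩ _ ⟨_, rfl⟩
  have hz : f (vertP r a A (Sum.inl ⟨0, by omega⟩)) = 0 := by
    simp [hw, vertP, seqFun_planeVertex]
  rw [hz] at h0
  have h1 := h0 (Sum.inl ⟨1, by omega⟩)
  have h2 := h0 (Sum.inl ⟨2, by omega⟩)
  simp only [hw, vertP, Sum.elim_inl, seqFun_planeVertex] at h1 h2
  norm_num at h1 h2
  have hw1 : w (2 * r + 1) = 0 := by linarith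
  have hw2 : w (2 * r + 2) = 0 := by linarith
  have hw3 : ∀ j < 2 * r + 3, w j = 0 := by
    intro j hj
    by_cases hj' : j < 2 * r + 1
    · have h3 := h0 (Sum.inr ⟨j, hj'⟩)
      simp only [hw, vertP, Sum.elim_inr, seqFun_farVertex r _ A _ hj', hw1] at h3
      linarith
    · obtain rfl | rfl : j = 2 * r + 1 ∨ j = 2 * r + 2 := by omega
      · exact hw1
      · exact hw2
  ext x
  rw [hw]
  simp [seqFun, seqVec, PiLp.inner_apply, fun i : Fin (2 * r + 3) => hw3 i i.2]

lemma adim_vertQ (r b : ℕ) (B : ℝ) (hb : 2 * r + 3 ≤ b) :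
    adim (convexHull ℝ (range (vertQ r b B))) = 2 * r + 3 := by
  refine adim_eq_of_separating _ fun f hf => ?_
  obtain ⟨w, hw⟩ := exists_eq_seqFun f
  have h0 : ∀ i, f (vertQ r b B i) = f (vertQ r b B (Sum.inl ⟨0, by omega⟩)) := fun i =>
    hf _ ⟨_, rfl⟩ _ ⟨_, rfl⟩
  have hz : f (vertQ r b B (Sum.inl ⟨0, by omega⟩)) = 0 := by
    simp [hw, vertQ, seqFun_curveVertex]
  rw [hz] at h0
  -- The functional restricted to the curve is a polynomial of degree at most `2r + 2` with
  -- `2r + 3` roots.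
  set q : Polynomial ℝ := ∑ i ∈ Finset.range (2 * r + 2), Polynomial.monomial (i + 1) (w i) with hq
  have hq0 : q = 0 := by
    refine Polynomial.eq_zero_of_natDegree_lt_card_of_eval_eq_zero (ι := Fin b) q
      (f := fun u => ((u : ℕ) : ℝ))
      (fun x y h => Fin.ext (Nat.cast_injective h)) (fun u => ?_) ?_
    · have h3 := h0 (Sum.inl u)
      simp only [hw, vertQ, Sum.elim_inl, seqFun_curveVertex] at h3
      rw [hq, Polynomial.eval_finsetSum]
      simpa [Polynomial.eval_monomial] using h3
    · rw [Fintype.card_fin]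
      refine lt_of_le_of_lt (Polynomial.natDegree_sum_le_of_forall_le (n := 2 * r + 2) _ _ ?_)
        (by omega)
      intro i hi
      rw [Finset.mem_range] at hi
      exact (Polynomial.natDegree_monomial_le _).trans (by omega)
  have hwlt : ∀ j < 2 * r + 2, w j = 0 := by
    intro j hj
    have : q.coeff (j + 1) = w j := by
      rw [hq, Polynomial.finsetSum_coeff, Finset.sum_eq_single j]
      · simp
      · intro i _ hij
        simp [Polynomial.coeff_monomial, hij]
      · simp [hj]
    rw [← this, hq0, Polynomial.coeff_zero]
  have hlast : w (2 * r + 2) = 0 := by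
    have h3 := h0 (Sum.inr ())
    simp only [hw, vertQ, Sum.elim_inr, seqFun_apexVertex, hwlt (2 * r + 1) (by omega)] at h3
    linarith
  have hall : ∀ j < 2 * r + 3, w j = 0 := by
    intro j hj
    by_cases hj' : j < 2 * r + 2
    · exact hwlt j hj'
    · rw [show j = 2 * r + 2 by omega, hlast]
  ext x
  rw [hw]
  simp [seqFun, seqVec, PiLp.inner_apply, fun i : Fin (2 * r + 3) => hall i i.2]

/-- The construction: the pairs of a planar vertex of `𝒫` and an `(r + 1)`-subset of the base
vertices of `𝒬` give distinct faces of the sum. -/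
lemma exists_large_sum (r a b : ℕ) (ha : 3 ≤ a) (hb : 2 * r + 3 ≤ b) :
    ∃ V W : Set (EuclideanSpace ℝ (Fin (2 * r + 3))),
      V.Finite ∧ W.Finite ∧
      adim (convexHull ℝ V) = 2 * r + 3 ∧ adim (convexHull ℝ W) = 2 * r + 3 ∧
      ((convexHull ℝ V).extremePoints ℝ).ncard = a + (2 * r + 1) ∧
      ((convexHull ℝ W).extremePoints ℝ).ncard = b + 1 ∧
      a * b.choose (r + 1) ≤ totalFaces (convexHull ℝ V + convexHull ℝ W) := by
  obtain ⟨A, hA0, hA⟩ : ∃ A : ℝ, 0 < A ∧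
      ∀ (G : Finset (Fin b)) (j : Fin (2 * r + 1)), -(facePoly G).coeff ((j : ℕ) + 1) < A := by
    obtain ⟨A, hA⟩ := (finite_range fun x : Finset (Fin b) × Fin (2 * r + 1) =>
      -(facePoly x.1).coeff ((x.2 : ℕ) + 1)).bddAbove
    refine ⟨max A 0 + 1, by positivity, fun G j => ?_⟩
    have : -(facePoly G).coeff ((j : ℕ) + 1) ≤ A := hA ⟨(G, j), rfl⟩
    have := le_max_left A 0
    linarith
  have hB0 : (0 : ℝ) < 2 * a + 1 := by positivity
  refine ⟨range (vertP r a A), range (vertQ r b (2 * a + 1)), finite_range _, finite_range _,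
    adim_vertP r a A ha, adim_vertQ r b _ hb, ncard_vertP r a A hA0, ncard_vertQ r b _ hB0, ?_⟩
  set V := range (vertP r a A) with hV
  set W := range (vertQ r b (2 * a + 1)) with hW
  let T : Finset (Fin a × Finset (Fin b)) :=
    Finset.univ ×ˢ Finset.powersetCard (r + 1) Finset.univ
  have hT : T.card = a * b.choose (r + 1) := by simp [T]
  have hTmem : ∀ x ∈ T, x.2.card = r + 1 := fun x hx => by simpa [T] using hx
  let f : Fin a × Finset (Fin b) → StrongDual ℝ (EuclideanSpace ℝ (Fin (2 * r + 3))) := fun x =>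
    seqFun _ (polyWeight r (facePoly x.2) (2 * ((x.1 : ℕ) : ℝ)))
  have key : ∀ x ∈ T, ∀ (s : Fin a) (u : Fin b),
      vertP r a A (Sum.inl s) + vertQ r b (2 * a + 1) (Sum.inl u) ∈
        (f x).toExposed (convexHull ℝ V + convexHull ℝ W) ↔ s = x.1 ∧ u ∈ x.2 := by
    rintro ⟨s₀, G⟩ hx s u
    have hcard : G.card = r + 1 := hTmem _ hx
    have hdeg : (facePoly G).natDegree = 2 * r + 2 := by rw [facePoly_natDegree, hcard]; ring
    have hm := facePoly_monic G
    obtain ⟨u₀, hu₀⟩ : G.Nonempty := Finset.card_pos.1 (by omega)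
    have hu₀' := (facePoly_eval_eq_zero_iff G u₀).2 hu₀
    have fP : ∀ s : Fin a, f (s₀, G) (vertP r a A (Sum.inl s)) =
        - ((s : ℕ) : ℝ) ^ 2 + 2 * ((s₀ : ℕ) : ℝ) * ((s : ℕ) : ℝ) := fun s => by
      simp only [f, vertP, Sum.elim_inl, seqFun_planeVertex, polyWeight_top r _ hdeg hm,
        polyWeight_last]
      ring
    have fQ : ∀ u : Fin b, f (s₀, G) (vertQ r b (2 * a + 1) (Sum.inl u)) =
        (facePoly G).eval 0 - (facePoly G).eval ((u : ℕ) : ℝ) := fun u => by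
      simp only [f, vertQ, Sum.elim_inl, polyWeight_curveVertex r _ hdeg]
    have maxP : ∀ z ∈ V, f (s₀, G) z ≤ f (s₀, G) (vertP r a A (Sum.inl s₀)) := by
      rintro _ ⟨s | j, rfl⟩
      · rw [fP, fP]
        nlinarith [sq_nonneg (((s : ℕ) : ℝ) - ((s₀ : ℕ) : ℝ))]
      · rw [fP]
        simp only [f, vertP, Sum.elim_inr, seqFun_farVertex r _ A _ j.2,
          polyWeight_top r _ hdeg hm]
        rw [polyWeight, if_pos (by have := j.2; omega)]
        nlinarith [sq_nonneg ((s₀ : ℕ) : ℝ), hA G j]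
    have maxQ : ∀ z ∈ W, f (s₀, G) z ≤ f (s₀, G) (vertQ r b (2 * a + 1) (Sum.inl u₀)) := by
      rintro _ ⟨u | _, rfl⟩
      · rw [fQ, fQ, hu₀']
        linarith [facePoly_eval_nonneg G ((u : ℕ) : ℝ)]
      · rw [fQ, hu₀']
        simp only [f, vertQ, Sum.elim_inr, seqFun_apexVertex, polyWeight_top r _ hdeg hm,
          polyWeight_last]
        have : ((s₀ : ℕ) : ℝ) ≤ a := by exact_mod_cast s₀.2.le
        linarith [facePoly_eval_nonneg G 0]
    rw [add_mem_toExposed_iff (f (s₀, G)) (mem_range_self _) (mem_range_self _) maxP maxQ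
      (mem_range_self _) (mem_range_self _), fP, fP, fQ, fQ, hu₀']
    refine and_congr ⟨fun h => ?_, fun h => by rw [h]⟩ ?_
    · have h' : (((s : ℕ) : ℝ) - ((s₀ : ℕ) : ℝ)) ^ 2 = 0 := by linarith
      exact Fin.ext (Nat.cast_injective (sub_eq_zero.1 (pow_eq_zero_iff two_ne_zero |>.1 h')))
    · rw [← facePoly_eval_eq_zero_iff G u]
      constructor <;> intro h <;> linarith
  rw [← hT]
  refine card_le_totalFaces (finite_range _) (finite_range _)
    ⟨_, mem_range_self (Sum.inl ⟨0, by omega⟩)⟩ ⟨_, mem_range_self (Sum.inl ⟨0, by omega⟩)⟩ T f ?_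
  rintro ⟨s, G⟩ hx ⟨s', G'⟩ hx' heq
  simp only at heq
  have hiff : ∀ s₁ u, (s₁ = s ∧ u ∈ G) ↔ (s₁ = s' ∧ u ∈ G') := fun s₁ u => by
    rw [← key _ hx s₁ u, ← key _ hx' s₁ u, heq]
  obtain ⟨u₀, hu₀⟩ : G.Nonempty := Finset.card_pos.1 (by rw [hTmem _ hx]; omega)
  have hs : s = s' := ((hiff s u₀).1 ⟨rfl, hu₀⟩).1
  subst hs
  refine Prod.ext rfl (Finset.ext fun u => ?_)
  simpa using hiff s u

/-! ### Counting -/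

/-- The number of faces in `exists_large_sum` has the required order of magnitude when `n ≤ m`. -/
lemma counting_bound (r n m : ℕ) (hn : 4 * r + 6 ≤ n) (hnm : n ≤ m) :
    1 / (4 * 2 ^ (r + 1) * ((r + 1).factorial : ℝ)) *
        ((n : ℝ) * (m : ℝ) ^ (r + 1) + (m : ℝ) * (n : ℝ) ^ (r + 1)) ≤
      (((n - (2 * r + 1)) * (m - 1).choose (r + 1) : ℕ) : ℝ) := by
  have hnm' : (n : ℝ) ≤ m := by exact_mod_cast hnm
  have h1 : (m : ℝ) * (n : ℝ) ^ (r + 1) ≤ (n : ℝ) * (m : ℝ) ^ (r + 1) := by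
    have : (n : ℝ) ^ r ≤ (m : ℝ) ^ r := by gcongr
    calc (m : ℝ) * (n : ℝ) ^ (r + 1) = (n : ℝ) * m * (n : ℝ) ^ r := by ring
      _ ≤ (n : ℝ) * m * (m : ℝ) ^ r := by gcongr
      _ = _ := by ring
  have h2 : (n : ℝ) / 2 ≤ ((n - (2 * r + 1) : ℕ) : ℝ) := by
    have : n ≤ 2 * (n - (2 * r + 1)) := by omega
    have : (n : ℝ) ≤ 2 * ((n - (2 * r + 1) : ℕ) : ℝ) := by exact_mod_cast this
    linarith
  have h3 : ((m : ℝ) / 2) ^ (r + 1) / ((r + 1).factorial : ℝ) ≤ ((m - 1).choose (r + 1) : ℝ) := by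
    refine le_trans ?_ (Nat.pow_le_choose (α := ℝ) (r + 1) (m - 1))
    have : m ≤ 2 * (m - 1 + 1 - (r + 1)) := by omega
    have : (m : ℝ) ≤ 2 * ((m - 1 + 1 - (r + 1) : ℕ) : ℝ) := by exact_mod_cast this
    gcongr
    linarith
  have hf : (0 : ℝ) < ((r + 1).factorial : ℝ) := by exact_mod_cast Nat.factorial_pos _
  rw [Nat.cast_mul]
  calc 1 / (4 * 2 ^ (r + 1) * ((r + 1).factorial : ℝ)) *
        ((n : ℝ) * (m : ℝ) ^ (r + 1) + (m : ℝ) * (n : ℝ) ^ (r + 1))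
      ≤ 1 / (4 * 2 ^ (r + 1) * ((r + 1).factorial : ℝ)) *
        (2 * ((n : ℝ) * (m : ℝ) ^ (r + 1))) := by gcongr; linarith
    _ = (n : ℝ) / 2 * (((m : ℝ) / 2) ^ (r + 1) / ((r + 1).factorial : ℝ)) := by
        rw [div_pow]
        field_simp
        ring
    _ ≤ _ := by gcongr

theorem stmt13 (d : ℕ) (hd : 3 ≤ d) (hodd : Odd d) :
    ∃ c : ℝ, 0 < c ∧ ∃ n₀ : ℕ,
      ∀ n m : ℕ, n₀ ≤ n → n₀ ≤ m →
        ∃ V W : Set (EuclideanSpace ℝ (Fin d)),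
          V.Finite ∧ W.Finite ∧
          adim (convexHull ℝ V) = d ∧ adim (convexHull ℝ W) = d ∧
          ((convexHull ℝ V).extremePoints ℝ).ncard = n ∧
          ((convexHull ℝ W).extremePoints ℝ).ncard = m ∧
          c * ((n : ℝ) * (m : ℝ) ^ (d / 2) + (m : ℝ) * (n : ℝ) ^ (d / 2)) ≤
            (totalFaces (convexHull ℝ V + convexHull ℝ W) : ℝ) := by
  obtain ⟨r, rfl⟩ : ∃ r, d = 2 * r + 3 := by
    obtain ⟨k, rfl⟩ := hodd
    exact ⟨k - 1, by omega⟩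
  rw [show (2 * r + 3) / 2 = r + 1 by omega]
  have main : ∀ n m : ℕ, 4 * r + 6 ≤ n → n ≤ m →
      ∃ V W : Set (EuclideanSpace ℝ (Fin (2 * r + 3))),
        V.Finite ∧ W.Finite ∧
        adim (convexHull ℝ V) = 2 * r + 3 ∧ adim (convexHull ℝ W) = 2 * r + 3 ∧
        ((convexHull ℝ V).extremePoints ℝ).ncard = n ∧
        ((convexHull ℝ W).extremePoints ℝ).ncard = m ∧
        1 / (4 * 2 ^ (r + 1) * ((r + 1).factorial : ℝ)) *
          ((n : ℝ) * (m : ℝ) ^ (r + 1) + (m : ℝ) * (n : ℝ) ^ (r + 1)) ≤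
            (totalFaces (convexHull ℝ V + convexHull ℝ W) : ℝ) := by
    intro n m hn hnm
    obtain ⟨V, W, h1, h2, h3, h4, h5, h6, h7⟩ :=
      exists_large_sum r (n - (2 * r + 1)) (m - 1) (by omega) (by omega)
    refine ⟨V, W, h1, h2, h3, h4, by omega, by omega, ?_⟩
    exact (counting_bound r n m hn hnm).trans (by exact_mod_cast h7)
  refine ⟨1 / (4 * 2 ^ (r + 1) * ((r + 1).factorial : ℝ)), by positivity, 4 * r + 6, ?_⟩
  intro n m hn hm
  rcases le_total n m with hnm | hmn
  · exact main n m hn hnm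
  · obtain ⟨V, W, h1, h2, h3, h4, h5, h6, h7⟩ := main m n hm hmn
    refine ⟨W, V, h2, h1, h4, h3, h6, h5, ?_⟩
    rw [add_comm (convexHull ℝ W), add_comm ((n : ℝ) * _)]
    exact h7
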